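/- (Lemma 4.1.) Suppose (X, Y₁, Y₂) satisfies the KKT conditions at y ∈ ℝ and g(y) = ‖X‖ > 0. Then −g(y) ≤ t̃(y, Y₂), and consequently y − ρ·g(y) ≤ y + ρ·t̃(y, Y₂) ≤ y*₂. -/

import Mathlib

/-!
Put `A = G(y) - Y₂`, which by the KKT conditions equals `Y₁ - X`. For a nonempty index set,
`c ≤ λ_min(A)` holds exactly when `A - c I` is positive semidefinite (`le_lamMin_iff`).

By Cauchy-Schwarz, `vᵀ X v ≤ ‖X‖ vᵀ v`, so `‖X‖ I - X` is positive semidefinite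
(`posSemidef_fnorm_smul_one_sub`). Adding `Y₁` gives `A + ‖X‖ I` positive semidefinite, that is
`-‖X‖ ≤ λ_min(A)`, hence `-‖X‖ ≤ t̃`. The same equivalence, used with `t̃ ≤ λ_min(A)`, shows that
`(y, t̃, Y₂)` is feasible for the problem defining `y*₂`, so `y + ρ t̃ ≤ y*₂`.
-/

open Matrix

/-- The trace inner product `⟨A, B⟩ = trace (A * B)` on symmetric matrices. -/
noncomputable def tip {m : ℕ} (A B : Matrix (Fin m) (Fin m) ℝ) : ℝ := (A * B).trace

/-- The dual cone (within the space of symmetric matrices, w.r.t. the trace inner product)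
of a set of symmetric matrices. -/
def mDualCone {m : ℕ} (K : Set (Matrix (Fin m) (Fin m) ℝ)) :
    Set (Matrix (Fin m) (Fin m) ℝ) :=
  {Y | Y.IsHermitian ∧ ∀ X ∈ K, 0 ≤ tip X Y}

/-- A nonempty closed convex cone of symmetric matrices. -/
def IsClosedConvexMatrixCone {m : ℕ} (K : Set (Matrix (Fin m) (Fin m) ℝ)) : Prop :=
  K.Nonempty ∧ IsClosed K ∧ Convex ℝ K ∧ (∀ (c : ℝ), 0 ≤ c → ∀ A ∈ K, c • A ∈ K) ∧
    ∀ A ∈ K, A.IsHermitian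

/-- The minimum eigenvalue of a symmetric matrix. -/
noncomputable def lamMin {m : ℕ} (A : Matrix (Fin m) (Fin m) ℝ) : ℝ :=
  if h : A.IsHermitian then ⨅ i, h.eigenvalues i else 0

/-- The Frobenius norm of a symmetric matrix: `‖A‖ = sqrt (trace (A * A))`. -/
noncomputable def fnorm {m : ℕ} (A : Matrix (Fin m) (Fin m) ℝ) : ℝ :=
  Real.sqrt ((A * A).trace)

open scoped MatrixOrder in
lemma posSemidef_sub_smul_one_iff {m : ℕ} {A : Matrix (Fin m) (Fin m) ℝ} (hA : A.IsHermitian)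
    (c : ℝ) :
    (A - c • (1 : Matrix (Fin m) (Fin m) ℝ)).PosSemidef ↔ ∀ i, c ≤ hA.eigenvalues i := by
  rw [← Algebra.algebraMap_eq_smul_one, ← Matrix.le_iff,
    algebraMap_le_iff_le_spectrum (ha := hA), hA.spectrum_real_eq_range_eigenvalues]
  simp

/-- Variational description of the minimum eigenvalue. The index set has to be nonempty, since
`lamMin` of the empty matrix is the junk value `0`. -/
lemma le_lamMin_iff {m : ℕ} [Nonempty (Fin m)] {A : Matrix (Fin m) (Fin m) ℝ}
    (hA : A.IsHermitian) (c : ℝ) :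
    c ≤ lamMin A ↔ (A - c • (1 : Matrix (Fin m) (Fin m) ℝ)).PosSemidef := by
  rw [posSemidef_sub_smul_one_iff hA, lamMin, dif_pos hA]
  exact le_ciInf_iff (Set.finite_range _).bddBelow

/-- The spectral norm is at most the Frobenius norm: `X ≤ ‖X‖ I` in the Loewner order. -/
lemma posSemidef_fnorm_smul_one_sub {m : ℕ} {X : Matrix (Fin m) (Fin m) ℝ}
    (hX : X.IsHermitian) :
    (fnorm X • (1 : Matrix (Fin m) (Fin m) ℝ) - X).PosSemidef := by
  refine .of_dotProduct_mulVec_nonneg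
    ((Matrix.isHermitian_one.smul (IsSelfAdjoint.all _)).sub hX) fun v => ?_
  have hsymm : ∀ i j, X j i = X i j := fun i j => by simpa using hX.apply i j
  have htr : (X * X).trace = ∑ p : Fin m × Fin m, X p.1 p.2 ^ 2 := by
    rw [Fintype.sum_prod_type]
    simp [Matrix.trace, Matrix.mul_apply, hsymm, sq]
  have hquad : v ⬝ᵥ X *ᵥ v = ∑ p : Fin m × Fin m, X p.1 p.2 * (v p.1 * v p.2) := by
    rw [Fintype.sum_prod_type]
    simp only [dotProduct, Matrix.mulVec, Finset.mul_sum]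
    exact Finset.sum_congr rfl fun i _ => Finset.sum_congr rfl fun j _ => by ring
  have hnorm : (v ⬝ᵥ v) ^ 2 = ∑ p : Fin m × Fin m, (v p.1 * v p.2) ^ 2 := by
    rw [Fintype.sum_prod_type, sq, dotProduct, Finset.sum_mul_sum]
    exact Finset.sum_congr rfl fun i _ => Finset.sum_congr rfl fun j _ => by ring
  have hvv : 0 ≤ v ⬝ᵥ v := Finset.sum_nonneg fun i _ => mul_self_nonneg _
  have htr0 : 0 ≤ (X * X).trace := htr ▸ Finset.sum_nonneg fun _ _ => sq_nonneg _
  -- Cauchy-Schwarz for `⟨X, v vᵀ⟩`, using `‖v vᵀ‖ = vᵀ v`.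
  have hcs : v ⬝ᵥ X *ᵥ v ≤ fnorm X * (v ⬝ᵥ v) := by
    refine le_of_sq_le_sq ?_ (mul_nonneg (Real.sqrt_nonneg _) hvv)
    rw [mul_pow, fnorm, Real.sq_sqrt htr0, htr, hnorm, hquad]
    exact Finset.sum_mul_sq_le_sq_mul_sq _ _ _
  simpa [Matrix.sub_mulVec, Matrix.smul_mulVec, dotProduct_sub] using hcs

/-- Lemma 4.1: if `(X, Y₁, Y₂)` satisfies the KKT conditions at `y` and
`g(y) = ‖X‖ > 0`, then `-g(y) ≤ t̃(y, Y₂)`, and consequently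
`y - ρ·g(y) ≤ y + ρ·t̃(y, Y₂) ≤ y*₂`. -/
theorem stmt_5 {m : ℕ} (K₂ : Set (Matrix (Fin m) (Fin m) ℝ))
    (hK₂ : IsClosedConvexMatrixCone K₂)
    (Q H : Matrix (Fin m) (Fin m) ℝ) (hQ : Q.IsHermitian) (hH : H.IsHermitian)
    (G : ℝ → Matrix (Fin m) (Fin m) ℝ) (hG : ∀ y, G y = Q - y • H)
    (ρ : ℝ) (hρ : 0 < ρ)
    (ttil : ℝ → Matrix (Fin m) (Fin m) ℝ → ℝ)
    (httil : ∀ y Y₂, ttil y Y₂ = min 0 (lamMin (G y - Y₂)))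
    (S : Set ℝ)
    (hS : S = {v : ℝ | ∃ (y t : ℝ) (Y₂ : Matrix (Fin m) (Fin m) ℝ),
      v = y + ρ * t ∧ t ≤ 0 ∧ Y₂ ∈ mDualCone K₂ ∧
      (G y - t • (1 : Matrix (Fin m) (Fin m) ℝ) - Y₂).PosSemidef})
    (hSbdd : BddAbove S) (ystar2 : ℝ) (hystar2 : ystar2 = sSup S)
    -- KKT conditions at y
    (y : ℝ) (X Y₁ Y₂ : Matrix (Fin m) (Fin m) ℝ)
    (hKKT : G y = Y₁ + Y₂ - X) (hY₁ : Y₁.PosSemidef) (hY₂ : Y₂ ∈ mDualCone K₂)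
    (hXpsd : X.PosSemidef) (hXK₂ : X ∈ K₂)
    (hXY₁ : tip X Y₁ = 0) (hXY₂ : tip X Y₂ = 0)
    -- g(y) = ‖X‖ > 0
    (hgy : 0 < fnorm X) :
    -(fnorm X) ≤ ttil y Y₂ ∧
      y - ρ * fnorm X ≤ y + ρ * ttil y Y₂ ∧
      y + ρ * ttil y Y₂ ≤ ystar2 := by
  -- The matrices of size `0` are excluded by `0 < ‖X‖`.
  have hne : Nonempty (Fin m) := by
    rcases m with _ | m
    · simp [fnorm, Matrix.trace] at hgy
    · infer_instance
  have hA : (G y - Y₂).IsHermitian := by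
    rw [hG]
    exact (hQ.sub (hH.smul (IsSelfAdjoint.all y))).sub hY₂.1
  have h1 : -(fnorm X) ≤ ttil y Y₂ := by
    rw [httil]
    refine le_min (by linarith) ((le_lamMin_iff hA _).2 ?_)
    have heq : G y - Y₂ - (-(fnorm X)) • (1 : Matrix (Fin m) (Fin m) ℝ)
        = Y₁ + (fnorm X • (1 : Matrix (Fin m) (Fin m) ℝ) - X) := by
      rw [hKKT, neg_smul]
      abel
    rw [heq]
    exact hY₁.add (posSemidef_fnorm_smul_one_sub hXpsd.1)
  refine ⟨h1, by nlinarith, ?_⟩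
  rw [hystar2]
  refine le_csSup hSbdd ?_
  rw [hS]
  refine ⟨y, ttil y Y₂, Y₂, rfl, by rw [httil]; exact min_le_left _ _, hY₂, ?_⟩
  rw [sub_right_comm, ← le_lamMin_iff hA, httil]
  exact min_le_right _ _
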